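/- If a valid chain element x is in a Q-stopper and x = Sum.inl p with p ∈ P, then h p = Function.invFunOn g Q p satisfies g (h p) = p and h p ∈ Q; that is, on P-elements of Q-stopper chains the witness h is a genuine right inverse of g. -/

import Mathlib

def SB.Valid {α β : Type*} (P : Set α) (Q : Set β) : α ⊕ β → Prop
  | Sum.inl p => p ∈ P
  | Sum.inr q => q ∈ Q

def SB.step {α β : Type*} (f : α → β) (g : β → α) : α ⊕ β → α ⊕ β
  | Sum.inl p => Sum.inr (f p)
  | Sum.inr q => Sum.inl (g q)

def SB.ChainLE {α β : Type*} (f : α → β) (g : β → α) : α ⊕ β → α ⊕ β → Prop :=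
  Relation.ReflTransGen (fun x y => y = SB.step f g x)

def SB.Initial {α β : Type*} (P : Set α) (Q : Set β) (f : α → β) (g : β → α) :
    α ⊕ β → Prop
  | Sum.inl p => p ∉ g '' Q
  | Sum.inr q => q ∉ f '' P

def SB.InQStopper {α β : Type*} (P : Set α) (Q : Set β) (f : α → β) (g : β → α)
    (x : α ⊕ β) : Prop :=
  ∃ q ∈ Q, SB.Initial P Q f g (Sum.inr q) ∧ SB.ChainLE f g (Sum.inr q) x

open Classical in
noncomputable def SB.h {α β : Type*} (P : Set α) (Q : Set β) (f : α → β)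
    (g : β → α) (p : α) : β :=
  if hq : SB.InQStopper P Q f g (Sum.inl p) then
    haveI : Nonempty β := ⟨hq.choose⟩
    Function.invFunOn g Q p
  else f p

/-- Every element reachable from a valid one is valid. -/
theorem SB.valid_of_chainLE {α β : Type*} {P : Set α} {Q : Set β} {f : α → β} {g : β → α}
    (hfm : Set.MapsTo f P Q) (hgm : Set.MapsTo g Q P) {x y : α ⊕ β}
    (hx : SB.Valid P Q x) (h : SB.ChainLE f g x y) : SB.Valid P Q y := by
  unfold SB.ChainLE at h
  induction h with
  | refl => exact hx
  | tail _ hstep ih =>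
    subst hstep
    rename_i b _
    cases b with
    | inl a => exact hfm ih
    | inr b => exact hgm ih

/-- A left element of a Q-stopper is in the image of `Q` under `g`. -/
theorem SB.mem_image_of_inQStopper {α β : Type*} {P : Set α} {Q : Set β} {f : α → β}
    {g : β → α} (hfm : Set.MapsTo f P Q) (hgm : Set.MapsTo g Q P) {p : α}
    (hs : SB.InQStopper P Q f g (Sum.inl p)) : ∃ q ∈ Q, g q = p := by
  obtain ⟨q, hq, _, hle⟩ := hs
  rcases Relation.ReflTransGen.cases_tail hle with h | ⟨c, hc, hstep⟩
  · cases h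
  · have hv : SB.Valid P Q c := SB.valid_of_chainLE hfm hgm (x := Sum.inr q) hq hc
    cases c with
    | inl a => cases hstep
    | inr b => exact ⟨b, hv, (Sum.inl.inj hstep).symm⟩

/-- The version of the result stated for the witness `SB.h`. -/
theorem SB.h_right_inverse {α β : Type*} {P : Set α} {Q : Set β} {f : α → β}
    {g : β → α} (hfm : Set.MapsTo f P Q) (hgm : Set.MapsTo g Q P) {p : α}
    (hs : SB.InQStopper P Q f g (Sum.inl p)) :
    g (SB.h P Q f g p) = p ∧ SB.h P Q f g p ∈ Q := by
  have hex := SB.mem_image_of_inQStopper hfm hgm hs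
  unfold SB.h
  rw [dif_pos hs]
  haveI : Nonempty β := ⟨f p⟩
  exact ⟨Function.invFunOn_eq hex, Function.invFunOn_mem hex⟩

theorem invFunOn_right_inverse_on_qStopper {α β : Type*} (P : Set α) (Q : Set β)
    (f : α → β) (g : β → α)
    (hfm : Set.MapsTo f P Q) (hfi : Set.InjOn f P)
    (hgm : Set.MapsTo g Q P) (hgi : Set.InjOn g Q)
    (p : α) (hp : p ∈ P) (hs : SB.InQStopper P Q f g (Sum.inl p)) :
    haveI : Nonempty β := ⟨f p⟩
    g (Function.invFunOn g Q p) = p ∧ Function.invFunOn g Q p ∈ Q := by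
  have hex := SB.mem_image_of_inQStopper hfm hgm hs
  haveI : Nonempty β := ⟨f p⟩
  exact ⟨Function.invFunOn_eq hex, Function.invFunOn_mem hex⟩
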